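/- Let (h,x) ∈ 𝒩_d ∩ 𝒩_ε with 0 < ε ≤ 1/15. Then for every i = 1,…,s: max{‖Δh_i‖², ‖Δx_i‖²} ≤ (7.5·δ_i² + 4·δ_0²)·d_{i0} and ‖Δh_i‖²·‖Δx_i‖² ≤ (δ_i² + δ_0²)·d_{i0}²/26. If in addition (h,x) ∈ 𝒩_μ and μ ≥ μ_h, then √L·‖B(Δh_i)‖_∞ ≤ 6μ√d_{i0} for every i. -/

import Mathlib

noncomputable section
open Finset ComplexConjugate

namespace RGD

/-- Squared Euclidean norm of a complex vector. -/
def vnormSq {n : ℕ} (v : Fin n → ℂ) : ℝ := ∑ j, ‖v j‖ ^ 2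

/-- Euclidean norm of a complex vector. -/
def vnorm {n : ℕ} (v : Fin n → ℂ) : ℝ := Real.sqrt (vnormSq v)

/-- Inner product, conjugate-linear in the first argument. -/
def vinner {n : ℕ} (u v : Fin n → ℂ) : ℂ := ∑ j, conj (u j) * v j

/-- Squared Frobenius norm of a matrix. -/
def frobSq {K N : ℕ} (Z : Matrix (Fin K) (Fin N) ℂ) : ℝ := ∑ k, ∑ j, ‖Z k j‖ ^ 2

/-- Frobenius norm of a matrix. -/
def frob {K N : ℕ} (Z : Matrix (Fin K) (Fin N) ℂ) : ℝ := Real.sqrt (frobSq Z)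

/-- Frobenius inner product `⟨U,V⟩ = Tr(U*V)`, conjugate-linear in the first argument. -/
def finner {K N : ℕ} (U V : Matrix (Fin K) (Fin N) ℂ) : ℂ := ∑ k, ∑ j, conj (U k j) * V k j

/-- Spectral (operator) norm of a matrix: sup of `‖Zv‖` over the closed unit ball. -/
def opNorm {K N : ℕ} (Z : Matrix (Fin K) (Fin N) ℂ) : ℝ :=
  sSup {r : ℝ | ∃ v : Fin N → ℂ, vnorm v ≤ 1 ∧ r = vnorm (Z.mulVec v)}

/-- Squared Frobenius norm of a block-diagonal matrix, given by its diagonal blocks. -/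
def famFrobSq {K N s : ℕ} (Z : Fin s → Matrix (Fin K) (Fin N) ℂ) : ℝ := ∑ i, frobSq (Z i)

/-- Frobenius norm of a block-diagonal matrix, given by its diagonal blocks. -/
def famFrob {K N s : ℕ} (Z : Fin s → Matrix (Fin K) (Fin N) ℂ) : ℝ := Real.sqrt (famFrobSq Z)

/-- The rank-one matrix `u v*`. -/
def rankOne {K N : ℕ} (u : Fin K → ℂ) (v : Fin N → ℂ) : Matrix (Fin K) (Fin N) ℂ :=
  Matrix.of fun k j => u k * conj (v j)

/-- `ℋ(h,x)`: block-diagonal matrix with `i`-th block `hᵢ xᵢ*`. -/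
def Hmap {K N s : ℕ} (h : Fin s → Fin K → ℂ) (x : Fin s → Fin N → ℂ) :
    Fin s → Matrix (Fin K) (Fin N) ℂ := fun i => rankOne (h i) (x i)

/-- `𝒜ᵢ(Z) = (bₗ* Z aₗ)ₗ`. -/
def calAi {K N L : ℕ} (b : Fin L → Fin K → ℂ) (a : Fin L → Fin N → ℂ)
    (Z : Matrix (Fin K) (Fin N) ℂ) : Fin L → ℂ :=
  fun l => vinner (b l) (Z.mulVec (a l))

/-- `𝒜(Z) = Σᵢ 𝒜ᵢ(Zᵢ)` on block-diagonal matrices. -/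
def calA {K N L s : ℕ} (b : Fin L → Fin K → ℂ) (a : Fin s → Fin L → Fin N → ℂ)
    (Z : Fin s → Matrix (Fin K) (Fin N) ℂ) : Fin L → ℂ :=
  fun l => ∑ i, calAi b (a i) (Z i) l

/-- `𝒜ᵢ*(z) = Σₗ zₗ bₗ aₗ*`. -/
def calAdj {K N L : ℕ} (b : Fin L → Fin K → ℂ) (a : Fin L → Fin N → ℂ)
    (z : Fin L → ℂ) : Matrix (Fin K) (Fin N) ℂ :=
  Matrix.of fun k j => ∑ l, z l * b l k * conj (a l j)

/-- `‖𝒜*(e)‖ = maxᵢ ‖𝒜ᵢ*(e)‖` (operator norms). -/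
def AadjNorm {K N L s : ℕ} (b : Fin L → Fin K → ℂ) (a : Fin s → Fin L → Fin N → ℂ)
    (e : Fin L → ℂ) : ℝ :=
  ⨆ i : Fin s, opNorm (calAdj b (a i) e)

/-- `B*B = I_K`, expressed in terms of the columns `bₗ` of `B*`. -/
def BtBeqI {K L : ℕ} (b : Fin L → Fin K → ℂ) : Prop :=
  ∀ k k' : Fin K, (∑ l, b l k * conj (b l k')) = if k = k' then (1 : ℂ) else 0

/-- `μ ≥ μ_h`, i.e. `√L ‖B h_{i0}‖_∞ ≤ μ ‖h_{i0}‖` for all `i`. -/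
def muhLe {K L s : ℕ} (b : Fin L → Fin K → ℂ) (h0 : Fin s → Fin K → ℂ) (μ : ℝ) : Prop :=
  ∀ i l, Real.sqrt L * ‖vinner (b l) (h0 i)‖ ≤ μ * vnorm (h0 i)

/-- `d₀ = √(Σᵢ d_{i0}²)`. -/
def dtot {s : ℕ} (d0 : Fin s → ℝ) : ℝ := Real.sqrt (∑ i, d0 i ^ 2)

/-- Condition number `κ = (maxᵢ d_{i0}) / (minᵢ d_{i0})`. -/
def kappa {s : ℕ} (d0 : Fin s → ℝ) : ℝ := (⨆ i, d0 i) / (⨅ i, d0 i)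

/-- The observation `y = 𝒜(ℋ(h₀,x₀)) + e`. -/
def yvec {K N L s : ℕ} (b : Fin L → Fin K → ℂ) (a : Fin s → Fin L → Fin N → ℂ)
    (h0 : Fin s → Fin K → ℂ) (x0 : Fin s → Fin N → ℂ) (e : Fin L → ℂ) : Fin L → ℂ :=
  fun l => calA b a (Hmap h0 x0) l + e l

/-- `F(h,x) = ‖𝒜(ℋ(h,x)) − y‖²`. -/
def Fobj {K N L s : ℕ} (b : Fin L → Fin K → ℂ) (a : Fin s → Fin L → Fin N → ℂ)
    (h0 : Fin s → Fin K → ℂ) (x0 : Fin s → Fin N → ℂ) (e : Fin L → ℂ)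
    (h : Fin s → Fin K → ℂ) (x : Fin s → Fin N → ℂ) : ℝ :=
  vnormSq (fun l => calA b a (Hmap h x) l - yvec b a h0 x0 e l)

def G0 (z : ℝ) : ℝ := max (z - 1) 0 ^ 2

def G0' (z : ℝ) : ℝ := 2 * max (z - 1) 0

/-- The `i`-th regularizer `Gᵢ(hᵢ,xᵢ)` (including the factor `ρ`). -/
def Gi {K N L : ℕ} (b : Fin L → Fin K → ℂ) (ρ μ di : ℝ)
    (hi : Fin K → ℂ) (xi : Fin N → ℂ) : ℝ :=
  ρ * (G0 (vnormSq hi / (2 * di)) + G0 (vnormSq xi / (2 * di))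
    + ∑ l, G0 ((L : ℝ) * ‖vinner (b l) hi‖ ^ 2 / (8 * di * μ ^ 2)))

/-- The regularizer `G(h,x) = Σᵢ Gᵢ(hᵢ,xᵢ)`. -/
def Greg {K N L s : ℕ} (b : Fin L → Fin K → ℂ) (ρ μ : ℝ) (dd : Fin s → ℝ)
    (h : Fin s → Fin K → ℂ) (x : Fin s → Fin N → ℂ) : ℝ :=
  ∑ i, Gi b ρ μ (dd i) (h i) (x i)

/-- `F̃ = F + G`. -/
def Ftil {K N L s : ℕ} (b : Fin L → Fin K → ℂ) (a : Fin s → Fin L → Fin N → ℂ)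
    (h0 : Fin s → Fin K → ℂ) (x0 : Fin s → Fin N → ℂ) (e : Fin L → ℂ)
    (ρ μ : ℝ) (dd : Fin s → ℝ)
    (h : Fin s → Fin K → ℂ) (x : Fin s → Fin N → ℂ) : ℝ :=
  Fobj b a h0 x0 e h x + Greg b ρ μ dd h x

/-- The residual `𝒜(ℋ(h,x)) − y`. -/
def residual {K N L s : ℕ} (b : Fin L → Fin K → ℂ) (a : Fin s → Fin L → Fin N → ℂ)
    (h0 : Fin s → Fin K → ℂ) (x0 : Fin s → Fin N → ℂ) (e : Fin L → ℂ)
    (h : Fin s → Fin K → ℂ) (x : Fin s → Fin N → ℂ) : Fin L → ℂ :=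
  fun l => calA b a (Hmap h x) l - yvec b a h0 x0 e l

/-- Wirtinger gradient `∇F_{hᵢ} = 𝒜ᵢ*(𝒜(ℋ(h,x)) − y) xᵢ`. -/
def gradFh {K N L s : ℕ} (b : Fin L → Fin K → ℂ) (a : Fin s → Fin L → Fin N → ℂ)
    (h0 : Fin s → Fin K → ℂ) (x0 : Fin s → Fin N → ℂ) (e : Fin L → ℂ)
    (h : Fin s → Fin K → ℂ) (x : Fin s → Fin N → ℂ) (i : Fin s) : Fin K → ℂ :=
  (calAdj b (a i) (residual b a h0 x0 e h x)).mulVec (x i)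

/-- Wirtinger gradient `∇F_{xᵢ} = (𝒜ᵢ*(𝒜(ℋ(h,x)) − y))* hᵢ`. -/
def gradFx {K N L s : ℕ} (b : Fin L → Fin K → ℂ) (a : Fin s → Fin L → Fin N → ℂ)
    (h0 : Fin s → Fin K → ℂ) (x0 : Fin s → Fin N → ℂ) (e : Fin L → ℂ)
    (h : Fin s → Fin K → ℂ) (x : Fin s → Fin N → ℂ) (i : Fin s) : Fin N → ℂ :=
  (calAdj b (a i) (residual b a h0 x0 e h x)).conjTranspose.mulVec (h i)

/-- Wirtinger gradient `∇G_{hᵢ}`. -/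
def gradGh {K L s : ℕ} (b : Fin L → Fin K → ℂ) (ρ μ : ℝ) (dd : Fin s → ℝ)
    (h : Fin s → Fin K → ℂ) (i : Fin s) : Fin K → ℂ :=
  fun k => ((ρ / (2 * dd i) : ℝ) : ℂ) *
    (((G0' (vnormSq (h i) / (2 * dd i)) : ℝ) : ℂ) * h i k
      + (((L : ℝ) / (4 * μ ^ 2) : ℝ) : ℂ) *
        ∑ l, ((G0' ((L : ℝ) * ‖vinner (b l) (h i)‖ ^ 2 / (8 * dd i * μ ^ 2)) : ℝ) : ℂ)
          * (vinner (b l) (h i) * b l k))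

/-- Wirtinger gradient `∇G_{xᵢ}`. -/
def gradGx {N s : ℕ} (ρ : ℝ) (dd : Fin s → ℝ)
    (x : Fin s → Fin N → ℂ) (i : Fin s) : Fin N → ℂ :=
  fun j => ((ρ / (2 * dd i) : ℝ) : ℂ) * (((G0' (vnormSq (x i) / (2 * dd i)) : ℝ) : ℂ) * x i j)

/-- `∇F̃_{hᵢ} = ∇F_{hᵢ} + ∇G_{hᵢ}`. -/
def gradH {K N L s : ℕ} (b : Fin L → Fin K → ℂ) (a : Fin s → Fin L → Fin N → ℂ)
    (h0 : Fin s → Fin K → ℂ) (x0 : Fin s → Fin N → ℂ) (e : Fin L → ℂ)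
    (ρ μ : ℝ) (dd : Fin s → ℝ)
    (h : Fin s → Fin K → ℂ) (x : Fin s → Fin N → ℂ) (i : Fin s) : Fin K → ℂ :=
  fun k => gradFh b a h0 x0 e h x i k + gradGh b ρ μ dd h i k

/-- `∇F̃_{xᵢ} = ∇F_{xᵢ} + ∇G_{xᵢ}`. -/
def gradX {K N L s : ℕ} (b : Fin L → Fin K → ℂ) (a : Fin s → Fin L → Fin N → ℂ)
    (h0 : Fin s → Fin K → ℂ) (x0 : Fin s → Fin N → ℂ) (e : Fin L → ℂ)
    (ρ μ : ℝ) (dd : Fin s → ℝ)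
    (h : Fin s → Fin K → ℂ) (x : Fin s → Fin N → ℂ) (i : Fin s) : Fin N → ℂ :=
  fun j => gradFx b a h0 x0 e h x i j + gradGx ρ dd x i j

/-- `‖∇F̃(h,x)‖²` (squared norm of the stacked Wirtinger gradient). -/
def gradNormSq {K N L s : ℕ} (b : Fin L → Fin K → ℂ) (a : Fin s → Fin L → Fin N → ℂ)
    (h0 : Fin s → Fin K → ℂ) (x0 : Fin s → Fin N → ℂ) (e : Fin L → ℂ)
    (ρ μ : ℝ) (dd : Fin s → ℝ)
    (h : Fin s → Fin K → ℂ) (x : Fin s → Fin N → ℂ) : ℝ :=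
  ∑ i, vnormSq (gradH b a h0 x0 e ρ μ dd h x i) + ∑ i, vnormSq (gradX b a h0 x0 e ρ μ dd h x i)

/-- `‖∇F̃(h',x') − ∇F̃(h,x)‖²`. -/
def gradDiffNormSq {K N L s : ℕ} (b : Fin L → Fin K → ℂ) (a : Fin s → Fin L → Fin N → ℂ)
    (h0 : Fin s → Fin K → ℂ) (x0 : Fin s → Fin N → ℂ) (e : Fin L → ℂ)
    (ρ μ : ℝ) (dd : Fin s → ℝ)
    (h : Fin s → Fin K → ℂ) (x : Fin s → Fin N → ℂ)
    (h' : Fin s → Fin K → ℂ) (x' : Fin s → Fin N → ℂ) : ℝ :=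
  ∑ i, vnormSq (fun k => gradH b a h0 x0 e ρ μ dd h' x' i k - gradH b a h0 x0 e ρ μ dd h x i k)
  + ∑ i, vnormSq (fun j => gradX b a h0 x0 e ρ μ dd h' x' i j - gradX b a h0 x0 e ρ μ dd h x i j)

/-- Membership in `𝒩_d`. -/
def inNd {K N s : ℕ} (d0 : Fin s → ℝ)
    (h : Fin s → Fin K → ℂ) (x : Fin s → Fin N → ℂ) : Prop :=
  ∀ i, vnorm (h i) ≤ 2 * Real.sqrt (d0 i) ∧ vnorm (x i) ≤ 2 * Real.sqrt (d0 i)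

/-- Membership in `𝒩_μ`. -/
def inNmu {K L s : ℕ} (b : Fin L → Fin K → ℂ) (d0 : Fin s → ℝ) (μ : ℝ)
    (h : Fin s → Fin K → ℂ) : Prop :=
  ∀ i, ∀ l, Real.sqrt L * ‖vinner (b l) (h i)‖ ≤ 4 * Real.sqrt (d0 i) * μ

/-- `δᵢ(hᵢ,xᵢ) = ‖hᵢxᵢ* − h_{i0}x_{i0}*‖_F / d_{i0}`. -/
def deltaI {K N : ℕ} (h0i : Fin K → ℂ) (x0i : Fin N → ℂ) (d0i : ℝ)
    (hi : Fin K → ℂ) (xi : Fin N → ℂ) : ℝ :=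
  frob (rankOne hi xi - rankOne h0i x0i) / d0i

/-- Membership in `𝒩_ε`. -/
def inNeps {K N s : ℕ} (h0 : Fin s → Fin K → ℂ) (x0 : Fin s → Fin N → ℂ)
    (d0 : Fin s → ℝ) (ε : ℝ)
    (h : Fin s → Fin K → ℂ) (x : Fin s → Fin N → ℂ) : Prop :=
  ∀ i, deltaI (h0 i) (x0 i) (d0 i) (h i) (x i) ≤ ε

/-- The global relative error `δ(h,x) = ‖ℋ(h,x) − X₀‖_F / d₀`. -/
def deltaTot {K N s : ℕ} (h0 : Fin s → Fin K → ℂ) (x0 : Fin s → Fin N → ℂ)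
    (d0 : Fin s → ℝ)
    (h : Fin s → Fin K → ℂ) (x : Fin s → Fin N → ℂ) : ℝ :=
  famFrob (fun i => Hmap h x i - Hmap h0 x0 i) / dtot d0

/-- Membership in `𝒩_F̃`. -/
def inNF {K N L s : ℕ} (b : Fin L → Fin K → ℂ) (a : Fin s → Fin L → Fin N → ℂ)
    (h0 : Fin s → Fin K → ℂ) (x0 : Fin s → Fin N → ℂ) (e : Fin L → ℂ)
    (d0 : Fin s → ℝ) (ρ μ : ℝ) (dd : Fin s → ℝ) (ε : ℝ)
    (h : Fin s → Fin K → ℂ) (x : Fin s → Fin N → ℂ) : Prop :=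
  Ftil b a h0 x0 e ρ μ dd h x ≤ ε ^ 2 * dtot d0 ^ 2 / (3 * (s : ℝ) * kappa d0 ^ 2) + vnormSq e

/-- The Local Restricted Isometry Property on `𝒩_d ∩ 𝒩_μ ∩ 𝒩_ε`. -/
def LocalRIP {K N L s : ℕ} (b : Fin L → Fin K → ℂ) (a : Fin s → Fin L → Fin N → ℂ)
    (h0 : Fin s → Fin K → ℂ) (x0 : Fin s → Fin N → ℂ)
    (d0 : Fin s → ℝ) (μ ε : ℝ) : Prop :=
  ∀ (h : Fin s → Fin K → ℂ) (x : Fin s → Fin N → ℂ),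
    inNd d0 h x → inNmu b d0 μ h → inNeps h0 x0 d0 ε h x →
      (2 / 3) * famFrobSq (fun i => Hmap h x i - Hmap h0 x0 i)
          ≤ vnormSq (calA b a fun i => Hmap h x i - Hmap h0 x0 i)
      ∧ vnormSq (calA b a fun i => Hmap h x i - Hmap h0 x0 i)
          ≤ (3 / 2) * famFrobSq (fun i => Hmap h x i - Hmap h0 x0 i)

/-- `α_{i1} = ⟨h_{i0}, hᵢ⟩ / d_{i0}`. -/
def alpha1 {K s : ℕ} (h0 : Fin s → Fin K → ℂ) (d0 : Fin s → ℝ)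
    (h : Fin s → Fin K → ℂ) (i : Fin s) : ℂ :=
  vinner (h0 i) (h i) / ((d0 i : ℝ) : ℂ)

/-- `α_{i2} = ⟨x_{i0}, xᵢ⟩ / d_{i0}`. -/
def alpha2 {N s : ℕ} (x0 : Fin s → Fin N → ℂ) (d0 : Fin s → ℝ)
    (x : Fin s → Fin N → ℂ) (i : Fin s) : ℂ :=
  vinner (x0 i) (x i) / ((d0 i : ℝ) : ℂ)

/-- `δ₀ = δ/10`. -/
def delta0 {K N s : ℕ} (h0 : Fin s → Fin K → ℂ) (x0 : Fin s → Fin N → ℂ)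
    (d0 : Fin s → ℝ) (h : Fin s → Fin K → ℂ) (x : Fin s → Fin N → ℂ) : ℝ :=
  deltaTot h0 x0 d0 h x / 10

/-- `αᵢ = (1−δ₀)α_{i1}` if `‖hᵢ‖ ≥ ‖xᵢ‖`, else `1/((1−δ₀) conj(α_{i2}))`. -/
def alphaC {K N s : ℕ} (h0 : Fin s → Fin K → ℂ) (x0 : Fin s → Fin N → ℂ)
    (d0 : Fin s → ℝ) (h : Fin s → Fin K → ℂ) (x : Fin s → Fin N → ℂ) (i : Fin s) : ℂ :=
  if vnorm (x i) ≤ vnorm (h i)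
  then ((1 - delta0 h0 x0 d0 h x : ℝ) : ℂ) * alpha1 h0 d0 h i
  else 1 / (((1 - delta0 h0 x0 d0 h x : ℝ) : ℂ) * conj (alpha2 x0 d0 x i))

/-- `Δhᵢ = hᵢ − αᵢ h_{i0}`. -/
def dh {K N s : ℕ} (h0 : Fin s → Fin K → ℂ) (x0 : Fin s → Fin N → ℂ)
    (d0 : Fin s → ℝ) (h : Fin s → Fin K → ℂ) (x : Fin s → Fin N → ℂ) (i : Fin s) :
    Fin K → ℂ :=
  fun k => h i k - alphaC h0 x0 d0 h x i * h0 i k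

/-- `Δxᵢ = xᵢ − conj(αᵢ)⁻¹ x_{i0}`. -/
def dx {K N s : ℕ} (h0 : Fin s → Fin K → ℂ) (x0 : Fin s → Fin N → ℂ)
    (d0 : Fin s → ℝ) (h : Fin s → Fin K → ℂ) (x : Fin s → Fin N → ℂ) (i : Fin s) :
    Fin N → ℂ :=
  fun j => x i j - (conj (alphaC h0 x0 d0 h x i))⁻¹ * x0 i j

/-- `σ²_max(h,x) = maxₗ Σᵢ |bₗ*hᵢ|² ‖xᵢ‖²`. -/
def sigmaMaxSq {K N L s : ℕ} (b : Fin L → Fin K → ℂ)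
    (h : Fin s → Fin K → ℂ) (x : Fin s → Fin N → ℂ) : ℝ :=
  ⨆ l : Fin L, ∑ i, ‖vinner (b l) (h i)‖ ^ 2 * vnormSq (x i)

/-- The rank-one bound (Lemma: `𝒜` on block-diagonal matrices with rank-1 blocks). -/
def RankOneBound {K N L s : ℕ} (b : Fin L → Fin K → ℂ)
    (a : Fin s → Fin L → Fin N → ℂ) : Prop :=
  ∀ (h : Fin s → Fin K → ℂ) (x : Fin s → Fin N → ℂ),
    vnormSq (calA b a (Hmap h x)) ≤
      4 / 3 * famFrobSq (Hmap h x)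
      + 2 * Real.sqrt (2 * (s : ℝ) * famFrobSq (Hmap h x) * sigmaMaxSq b h x
          * ((K : ℝ) + N) * Real.log L)
      + 8 * (s : ℝ) * sigmaMaxSq b h x * ((K : ℝ) + N) * Real.log L

/-- The subspace `Tᵢ = {h_{i0} v* + u x_{i0}*}`. -/
def Tspace {K N : ℕ} (h0i : Fin K → ℂ) (x0i : Fin N → ℂ) :
    Set (Matrix (Fin K) (Fin N) ℂ) :=
  {Z | ∃ (u : Fin K → ℂ) (v : Fin N → ℂ), Z = rankOne h0i v + rankOne u x0i}

/-- `P` is the orthogonal projection onto `Tᵢ` w.r.t. the Frobenius inner product. -/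
def IsFrobProj {K N : ℕ} (h0i : Fin K → ℂ) (x0i : Fin N → ℂ)
    (P : Matrix (Fin K) (Fin N) ℂ → Matrix (Fin K) (Fin N) ℂ) : Prop :=
  ∀ Z, P Z ∈ Tspace h0i x0i ∧ ∀ W ∈ Tspace h0i x0i, finner W (Z - P Z) = 0

/-- Operator norm of `𝒜ᵢ` from `(ℂ^{K×N}, ‖·‖_F)` to `(ℂ^L, ‖·‖)`. -/
def calAiOpNorm {K N L : ℕ} (b : Fin L → Fin K → ℂ) (a : Fin L → Fin N → ℂ) : ℝ :=
  sSup {r : ℝ | ∃ Z : Matrix (Fin K) (Fin N) ℂ, frob Z ≤ 1 ∧ r = vnorm (calAi b a Z)}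

/-- Operator norm of `𝒜` from block-diagonal matrices with `‖·‖_F` to `ℂ^L`. -/
def calAOpNorm {K N L s : ℕ} (b : Fin L → Fin K → ℂ)
    (a : Fin s → Fin L → Fin N → ℂ) : ℝ :=
  sSup {r : ℝ | ∃ Z : Fin s → Matrix (Fin K) (Fin N) ℂ, famFrob Z ≤ 1 ∧ r = vnorm (calA b a Z)}

/-- Norm of a stacked vector in `ℂ^{ns}`. -/
def stackNorm {n s : ℕ} (u : Fin s → Fin n → ℂ) : ℝ := Real.sqrt (∑ i, vnormSq (u i))

/-- Norm of a point `z = (h,x) ∈ ℂ^{s(K+N)}`. -/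
def pairNorm {K N s : ℕ} (u : Fin s → Fin K → ℂ) (v : Fin s → Fin N → ℂ) : ℝ :=
  Real.sqrt (∑ i, vnormSq (u i) + ∑ i, vnormSq (v i))

/-- `z + t • w` componentwise, `t` real. -/
def shiftV {n s : ℕ} (u w : Fin s → Fin n → ℂ) (t : ℝ) : Fin s → Fin n → ℂ :=
  fun i k => u i k + (t : ℂ) * w i k

/-- `σ_max(h) = maxₗ √(Σᵢ |bₗ*hᵢ|²)` (unit `xᵢ`'s). -/
def sigmaMaxU {K L s : ℕ} (b : Fin L → Fin K → ℂ) (h : Fin s → Fin K → ℂ) : ℝ :=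
  ⨆ l, Real.sqrt (∑ i, ‖vinner (b l) (h i)‖ ^ 2)

theorem le_of_sq_le_sq {a b : ℝ} (h : a ^ 2 ≤ b ^ 2) (hb : 0 ≤ b) : a ≤ b :=
  (abs_le_of_sq_le_sq' h hb).2

theorem vnormSq_nonneg {n : ℕ} (v : Fin n → ℂ) : 0 ≤ vnormSq v :=
  Finset.sum_nonneg fun _ _ => by positivity

theorem vnorm_sq {n : ℕ} (v : Fin n → ℂ) : vnorm v ^ 2 = vnormSq v :=
  Real.sq_sqrt (vnormSq_nonneg v)

theorem frobSq_nonneg {K N : ℕ} (Z : Matrix (Fin K) (Fin N) ℂ) : 0 ≤ frobSq Z :=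
  Finset.sum_nonneg fun _ _ => Finset.sum_nonneg fun _ _ => by positivity

theorem frob_nonneg {K N : ℕ} (Z : Matrix (Fin K) (Fin N) ℂ) : 0 ≤ frob Z :=
  Real.sqrt_nonneg _

theorem frob_sq {K N : ℕ} (Z : Matrix (Fin K) (Fin N) ℂ) : frob Z ^ 2 = frobSq Z :=
  Real.sq_sqrt (frobSq_nonneg Z)

theorem norm_sub_sq_complex (z w : ℂ) :
    ‖z - w‖ ^ 2 = ‖z‖ ^ 2 - 2 * (conj w * z).re + ‖w‖ ^ 2 := by
  simp only [← Complex.normSq_eq_norm_sq, Complex.normSq_apply, Complex.sub_re, Complex.sub_im,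
    Complex.mul_re, Complex.conj_re, Complex.conj_im]
  ring

theorem vnormSq_sub_smul {n : ℕ} (u u0 : Fin n → ℂ) (t : ℂ) :
    vnormSq (fun k => u k - t * u0 k)
      = vnormSq u - 2 * (conj t * vinner u0 u).re + ‖t‖ ^ 2 * vnormSq u0 := by
  simp only [vnormSq, vinner, norm_sub_sq_complex, Finset.sum_add_distrib, Finset.sum_sub_distrib,
    Finset.mul_sum, Complex.re_sum, map_mul, norm_mul, mul_pow, mul_assoc]

/-- Pythagoras for the residual of `u` along `u0`, where `vnormSq u0 = d`. -/
theorem vnormSq_sub_smul_eq {n : ℕ} (u u0 : Fin n → ℂ) {d : ℝ} (hd : 0 < d)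
    (hu0 : vnormSq u0 = d) (t : ℂ) :
    vnormSq (fun k => u k - t * u0 k)
      = d * (‖vinner u0 u / d - t‖ ^ 2 + (vnormSq u / d - ‖vinner u0 u / d‖ ^ 2)) := by
  obtain ⟨a, ha⟩ : ∃ a : ℂ, vinner u0 u = d * a :=
    ⟨vinner u0 u / d, by field_simp [Complex.ofReal_ne_zero.mpr hd.ne']⟩
  have hdc : (d : ℂ) ≠ 0 := Complex.ofReal_ne_zero.mpr hd.ne'
  rw [vnormSq_sub_smul, hu0, ha, mul_div_cancel_left₀ _ hdc, norm_sub_sq_complex, mul_left_comm,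
    Complex.re_ofReal_mul]
  field_simp
  ring

theorem norm_sq_vinner_div_le {n : ℕ} (u u0 : Fin n → ℂ) {d : ℝ} (hd : 0 < d)
    (hu0 : vnormSq u0 = d) : ‖vinner u0 u / d‖ ^ 2 ≤ vnormSq u / d := by
  have h := vnormSq_sub_smul_eq u u0 hd hu0 (vinner u0 u / d)
  rw [sub_self, norm_zero] at h
  have h' := h ▸ vnormSq_nonneg _
  have := nonneg_of_mul_nonneg_right h' hd
  linarith

theorem frobSq_rankOne_sub {K N : ℕ} (u u0 : Fin K → ℂ) (v v0 : Fin N → ℂ) :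
    frobSq (rankOne u v - rankOne u0 v0)
      = vnormSq u * vnormSq v - 2 * (vinner u0 u * conj (vinner v0 v)).re
        + vnormSq u0 * vnormSq v0 := by
  have hinner : vinner u0 u * conj (vinner v0 v)
      = ∑ k, ∑ j, conj (u0 k * conj (v0 j)) * (u k * conj (v j)) := by
    simp only [vinner, map_sum, Finset.sum_mul_sum, map_mul, Complex.conj_conj]
    exact Finset.sum_congr rfl fun k _ => Finset.sum_congr rfl fun j _ => by ring
  rw [hinner]
  simp only [vnormSq, Finset.sum_mul_sum, frobSq, rankOne, Matrix.sub_apply, Matrix.of_apply,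
    norm_sub_sq_complex, Finset.sum_add_distrib, Finset.sum_sub_distrib, Complex.re_sum, norm_mul,
    mul_pow, RCLike.norm_conj, ← Finset.mul_sum]

theorem frobSq_rankOne_sub_comm {K N : ℕ} (u u0 : Fin K → ℂ) (v v0 : Fin N → ℂ) :
    frobSq (rankOne v u - rankOne v0 u0) = frobSq (rankOne u v - rankOne u0 v0) := by
  rw [frobSq_rankOne_sub, frobSq_rankOne_sub]
  have : (vinner v0 v * conj (vinner u0 u)).re = (vinner u0 u * conj (vinner v0 v)).re := by
    simp only [Complex.mul_re, Complex.conj_re, Complex.conj_im]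
    ring
  rw [this]
  ring

/-- The scalar inequalities behind the bounds: `A`, `B` are the squared moduli of the coefficients
along the reference directions, `p`, `q` the squared norms of the orthogonal residuals, and `e` the
squared coefficient error of the rescaled factor. -/
theorem residual_bounds {A B p q w D c e : ℝ} (hA : 0 ≤ A) (hB : 0 ≤ B) (hp : 0 ≤ p) (hq : 0 ≤ q)
    (hw : 0 ≤ w) (hD : 0 ≤ D) (hD15 : D ≤ 1 / 15) (hc : 0 ≤ c) (hc150 : c ≤ 1 / 150)
    (hdec : D ^ 2 = w ^ 2 + A * q + B * p + p * q) (hAB : (1 - w) ^ 2 ≤ A * B)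
    (hU : A + p ≤ 4) (hVU : B + q ≤ A + p) (he : e * A ≤ (w + 150 / 149 * c) ^ 2) :
    13 / 14 ≤ A ∧ c ^ 2 * A + p ≤ 7.5 * D ^ 2 + 4 * c ^ 2 ∧ e + q ≤ 7.5 * D ^ 2 + 4 * c ^ 2 ∧
      (c ^ 2 * A + p) * (e + q) ≤ (D ^ 2 + c ^ 2) / 26 := by
  have hAq := mul_nonneg hA hq
  have hBp := mul_nonneg hB hp
  have hpq := mul_nonneg hp hq
  have hD2 : D ^ 2 ≤ 1 / 225 := (pow_le_pow_left₀ hD hD15 2).trans_eq (by norm_num)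
  have hwD : w ≤ D := by
    refine le_of_sq_le_sq ?_ hD
    linarith
  have hAB' : 196 / 225 ≤ A * B := by
    linarith [pow_le_pow_left₀ (by norm_num) (show 14 / 15 ≤ 1 - w by linarith) 2]
  have hUV : 196 / 225 ≤ (A + p) * (B + q) := by linarith
  have hU14 : 14 / 15 ≤ A + p := by
    refine le_of_sq_le_sq ?_ (add_nonneg hA hp)
    linarith [mul_le_mul_of_nonneg_left hVU (add_nonneg hA hp)]
  have hpV : p * (B + q) ≤ D ^ 2 := by linarith [sq_nonneg w]
  have hqU : q * (A + p) ≤ D ^ 2 := by linarith [sq_nonneg w]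
  have hpU : 196 / 225 * p ≤ D ^ 2 * (A + p) := by
    linarith [mul_le_mul_of_nonneg_left hUV hp,
      mul_le_mul_of_nonneg_right hpV (add_nonneg hA hp)]
  have hA13 : 13 / 14 ≤ A := by
    linarith [mul_le_mul_of_nonneg_right hD2 (add_nonneg hA hp)]
  have hpD : p ≤ 225 / 49 * D ^ 2 := by linarith [mul_le_mul_of_nonneg_left hU (sq_nonneg D)]
  have hqD : q ≤ 15 / 14 * D ^ 2 := by linarith [mul_le_mul_of_nonneg_left hU14 hq]
  have hE0 : (w + 150 / 149 * c) ^ 2 ≤ 11 / 2000 := by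
    have : w + 150 / 149 * c ≤ 1 / 15 + 1 / 149 := by linarith
    exact (pow_le_pow_left₀ (by positivity) this 2).trans (by norm_num)
  have hED : (w + 150 / 149 * c) ^ 2 ≤ 2 * D ^ 2 + 3 * c ^ 2 := by
    linarith [sq_nonneg (w - 150 / 149 * c), sq_nonneg c]
  have heE : e ≤ 14 / 13 * (w + 150 / 149 * c) ^ 2 := by
    by_contra! hlt
    linarith [mul_le_mul_of_nonneg_left hA13
      (show 0 ≤ e by linarith [sq_nonneg (w + 150 / 149 * c)])]
  have hc2A : c ^ 2 * A ≤ c ^ 2 * 4 := by gcongr; linarith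
  refine ⟨hA13, by linarith [sq_nonneg D], by linarith [sq_nonneg D, sq_nonneg c], ?_⟩
  have hce : c ^ 2 * (e * A) ≤ c ^ 2 * (11 / 2000) := by gcongr; linarith
  have hpe : p * e ≤ 225 / 49 * D ^ 2 * (14 / 13 * (11 / 2000)) := by
    refine (mul_le_mul_of_nonneg_left (heE.trans
      (mul_le_mul_of_nonneg_left hE0 (by norm_num))) hp).trans ?_
    gcongr
  have hcq : c ^ 2 * (A * q) ≤ c ^ 2 * (1 / 225) := by gcongr; linarith
  have hpqD : p * q ≤ D ^ 2 / 196 := by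
    linarith [mul_le_mul_of_nonneg_left hUV hpq, mul_le_mul hpV (hqU.trans hD2)
      (mul_nonneg hq (add_nonneg hA hp)) (sq_nonneg D)]
  calc (c ^ 2 * A + p) * (e + q) = c ^ 2 * (e * A) + p * e + c ^ 2 * (A * q) + p * q := by ring
    _ ≤ (D ^ 2 + c ^ 2) / 26 := by linarith [sq_nonneg D, sq_nonneg c]

/-- The bounds for one block, in terms of the larger factor `u` and the smaller factor `v`. -/
theorem block_bounds {K N : ℕ} {u u0 : Fin K → ℂ} {v v0 : Fin N → ℂ} {d D c : ℝ} (hd : 0 < d)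
    (hu0 : vnormSq u0 = d) (hv0 : vnormSq v0 = d) (hu : vnormSq u ≤ 4 * d)
    (hvu : vnormSq v ≤ vnormSq u) (hD : 0 ≤ D) (hD15 : D ≤ 1 / 15) (hc : 0 ≤ c)
    (hc150 : c ≤ 1 / 150) (hfrob : frobSq (rankOne u v - rankOne u0 v0) = (D * d) ^ 2)
    {t r : ℂ} (ht : t = ((1 - c : ℝ) : ℂ) * (vinner u0 u / d)) (hr : r = (conj t)⁻¹) :
    (13 / 14 ≤ ‖vinner u0 u / d‖ ^ 2 ∧ ‖vinner u0 u / d‖ ^ 2 ≤ 4) ∧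
    vnormSq (fun k => u k - t * u0 k) ≤ (7.5 * D ^ 2 + 4 * c ^ 2) * d ∧
    vnormSq (fun j => v j - r * v0 j) ≤ (7.5 * D ^ 2 + 4 * c ^ 2) * d ∧
    vnormSq (fun k => u k - t * u0 k) * vnormSq (fun j => v j - r * v0 j)
      ≤ (D ^ 2 + c ^ 2) * d ^ 2 / 26 := by
  have hp := sub_nonneg.mpr (norm_sq_vinner_div_le u u0 hd hu0)
  have hq := sub_nonneg.mpr (norm_sq_vinner_div_le v v0 hd hv0)
  have hu4 : vnormSq u / d ≤ 4 := (div_le_iff₀ hd).mpr hu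
  have hvu' : vnormSq v / d ≤ vnormSq u / d := by gcongr
  rw [vnormSq_sub_smul_eq u u0 hd hu0, vnormSq_sub_smul_eq v v0 hd hv0]
  rw [frobSq_rankOne_sub, hu0, hv0] at hfrob
  have hdc : (d : ℂ) ≠ 0 := Complex.ofReal_ne_zero.mpr hd.ne'
  obtain ⟨a, ha⟩ : ∃ a : ℂ, vinner u0 u / d = a := ⟨_, rfl⟩
  obtain ⟨b, hb⟩ : ∃ b : ℂ, vinner v0 v / d = b := ⟨_, rfl⟩
  obtain ⟨U, hU⟩ : ∃ U : ℝ, vnormSq u / d = U := ⟨_, rfl⟩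
  obtain ⟨V, hV⟩ : ∃ V : ℝ, vnormSq v / d = V := ⟨_, rfl⟩
  rw [(div_eq_iff hdc).mp ha, (div_eq_iff hdc).mp hb, (div_eq_iff hd.ne').mp hU,
    (div_eq_iff hd.ne').mp hV, map_mul, Complex.conj_ofReal] at hfrob
  rw [ha] at ht
  rw [ha, hU] at hp
  rw [hb, hV] at hq
  rw [hU] at hu4
  rw [hU, hV] at hvu'
  rw [ha, hb, hU, hV]
  have hre : (a * d * (conj b * d)).re = d ^ 2 * (a * conj b).re := by
    rw [← Complex.re_ofReal_mul]
    push_cast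
    ring_nf
  rw [hre] at hfrob
  have hD2 : D ^ 2 = U * V - 2 * (a * conj b).re + 1 := by
    have : d ^ 2 * D ^ 2 = d ^ 2 * (U * V - 2 * (a * conj b).re + 1) := by linarith
    exact mul_left_cancel₀ (by positivity) this
  have hw2 : ‖a * conj b - 1‖ ^ 2 = ‖a‖ ^ 2 * ‖b‖ ^ 2 - 2 * (a * conj b).re + 1 := by
    rw [norm_sub_sq_complex, norm_mul, RCLike.norm_conj]
    simp [mul_pow]
  have hdec : D ^ 2 = ‖a * conj b - 1‖ ^ 2 + ‖a‖ ^ 2 * (V - ‖b‖ ^ 2) + ‖b‖ ^ 2 * (U - ‖a‖ ^ 2)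
      + (U - ‖a‖ ^ 2) * (V - ‖b‖ ^ 2) := by
    rw [hw2, hD2]
    ring
  have hwD : ‖a * conj b - 1‖ ≤ D := by
    refine le_of_sq_le_sq ?_ hD
    have := mul_nonneg (sq_nonneg ‖a‖) hq
    have := mul_nonneg (sq_nonneg ‖b‖) hp
    have := mul_nonneg hp hq
    linarith
  have hz : 1 - ‖a * conj b - 1‖ ≤ ‖a‖ * ‖b‖ := by
    have := norm_sub_norm_le (1 : ℂ) (a * conj b)
    rw [norm_sub_rev, norm_mul, RCLike.norm_conj, norm_one] at this
    linarith
  have hAB : (1 - ‖a * conj b - 1‖) ^ 2 ≤ ‖a‖ ^ 2 * ‖b‖ ^ 2 := by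
    rw [← mul_pow]
    exact pow_le_pow_left₀ (by linarith) hz 2
  have ha0 : a ≠ 0 := by
    rintro rfl
    rw [norm_zero, zero_mul] at hz
    simp only [zero_mul] at hwD
    linarith
  have hc1 : ((1 - c : ℝ) : ℂ) ≠ 0 := Complex.ofReal_ne_zero.mpr (by linarith)
  have hca : conj a ≠ 0 := by simpa using ha0
  have hra : ‖b - r‖ * ‖a‖ ≤ ‖a * conj b - 1‖ + 150 / 149 * c := by
    have h1 : (b - r) * conj a = conj (a * conj b - 1) - ((c / (1 - c) : ℝ) : ℂ) := by
      rw [hr, ht, sub_mul, map_mul, Complex.conj_ofReal, mul_inv, mul_assoc, inv_mul_cancel₀ hca]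
      have h2 : ((1 - c : ℝ) : ℂ)⁻¹ = 1 + ((c / (1 - c) : ℝ) : ℂ) := by
        rw [← Complex.ofReal_inv, ← Complex.ofReal_one, ← Complex.ofReal_add]
        congr 1
        have : 1 - c ≠ 0 := by linarith
        field_simp
        ring
      rw [h2]
      simp only [map_sub, map_mul, Complex.conj_conj, map_one]
      ring
    have h3 : c / (1 - c) ≤ 150 / 149 * c := by
      rw [div_le_iff₀ (by linarith)]
      nlinarith
    have h4 : 0 ≤ c / (1 - c) := div_nonneg hc (by linarith)
    have h5 := norm_sub_le (conj (a * conj b - 1)) ((c / (1 - c) : ℝ) : ℂ)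
    rw [← h1, norm_mul, RCLike.norm_conj, RCLike.norm_conj, Complex.norm_real, Real.norm_eq_abs,
      abs_of_nonneg h4] at h5
    linarith
  have he : ‖b - r‖ ^ 2 * ‖a‖ ^ 2 ≤ (‖a * conj b - 1‖ + 150 / 149 * c) ^ 2 := by
    rw [← mul_pow]
    exact pow_le_pow_left₀ (by positivity) hra 2
  have hta : ‖a - t‖ ^ 2 = c ^ 2 * ‖a‖ ^ 2 := by
    have : a - t = (c : ℂ) * a := by
      rw [ht]
      push_cast
      ring
    rw [this, norm_mul, Complex.norm_real, mul_pow, Real.norm_eq_abs, sq_abs]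
  obtain ⟨h1, h2, h3, h4⟩ := residual_bounds (sq_nonneg ‖a‖) (sq_nonneg ‖b‖) hp hq
    (norm_nonneg _) hD hD15 hc hc150 hdec hAB (by linarith) (by linarith) he
  rw [hta]
  refine ⟨⟨h1, by linarith⟩, ?_, ?_, ?_⟩
  · rw [mul_comm d]
    gcongr
  · rw [mul_comm d]
    gcongr
  · calc _ = d ^ 2 * ((c ^ 2 * ‖a‖ ^ 2 + (U - ‖a‖ ^ 2)) * (‖b - r‖ ^ 2 + (V - ‖b‖ ^ 2))) := by ring
      _ ≤ d ^ 2 * ((D ^ 2 + c ^ 2) / 26) := by gcongr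
      _ = _ := by ring

theorem deltaI_nonneg {K N : ℕ} (h0i : Fin K → ℂ) (x0i : Fin N → ℂ) {d : ℝ} (hd : 0 < d)
    (hi : Fin K → ℂ) (xi : Fin N → ℂ) : 0 ≤ deltaI h0i x0i d hi xi :=
  div_nonneg (frob_nonneg _) hd.le

theorem frobSq_eq_deltaI {K N : ℕ} (h0i : Fin K → ℂ) (x0i : Fin N → ℂ) {d : ℝ} (hd : 0 < d)
    (hi : Fin K → ℂ) (xi : Fin N → ℂ) :
    frobSq (rankOne hi xi - rankOne h0i x0i) = (deltaI h0i x0i d hi xi * d) ^ 2 := by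
  rw [deltaI, div_mul_cancel₀ _ hd.ne', frob_sq]

theorem delta0_nonneg {K N s : ℕ} (h0 : Fin s → Fin K → ℂ) (x0 : Fin s → Fin N → ℂ)
    (d0 : Fin s → ℝ) (h : Fin s → Fin K → ℂ) (x : Fin s → Fin N → ℂ) :
    0 ≤ delta0 h0 x0 d0 h x :=
  div_nonneg (div_nonneg (Real.sqrt_nonneg _) (Real.sqrt_nonneg _)) (by norm_num)

theorem deltaTot_le {K N s : ℕ} {h0 : Fin s → Fin K → ℂ} {x0 : Fin s → Fin N → ℂ}
    {d0 : Fin s → ℝ} (hd0 : ∀ i, 0 < d0 i) {ε : ℝ} (hε : 0 ≤ ε)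
    {h : Fin s → Fin K → ℂ} {x : Fin s → Fin N → ℂ} (hNε : inNeps h0 x0 d0 ε h x) :
    deltaTot h0 x0 d0 h x ≤ ε := by
  refine div_le_of_le_mul₀ (Real.sqrt_nonneg _) hε ?_
  refine Real.sqrt_le_iff.mpr ⟨mul_nonneg hε (Real.sqrt_nonneg _), ?_⟩
  rw [mul_pow, dtot, Real.sq_sqrt (Finset.sum_nonneg fun _ _ => sq_nonneg _), Finset.mul_sum]
  refine Finset.sum_le_sum fun i _ => ?_
  simp only [Hmap]
  rw [frobSq_eq_deltaI _ _ (hd0 i), mul_pow]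
  exact mul_le_mul_of_nonneg_right
    (pow_le_pow_left₀ (deltaI_nonneg _ _ (hd0 i) _ _) (hNε i) 2) (sq_nonneg _)

/-- The bounds for the `i`-th block, together with `‖αᵢ‖ ≤ 2`. -/
theorem dh_dx_bounds {K N s : ℕ} {h0 : Fin s → Fin K → ℂ} {x0 : Fin s → Fin N → ℂ}
    {d0 : Fin s → ℝ} (hd0 : ∀ i, 0 < d0 i)
    (hh0 : ∀ i, vnorm (h0 i) = Real.sqrt (d0 i)) (hx0 : ∀ i, vnorm (x0 i) = Real.sqrt (d0 i))
    {ε : ℝ} (hε : 0 ≤ ε) (hε15 : ε ≤ 1 / 15) {h : Fin s → Fin K → ℂ} {x : Fin s → Fin N → ℂ}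
    (hNd : inNd d0 h x) (hNε : inNeps h0 x0 d0 ε h x) (i : Fin s) :
    ‖alphaC h0 x0 d0 h x i‖ ≤ 2 ∧
    vnormSq (dh h0 x0 d0 h x i)
      ≤ (7.5 * deltaI (h0 i) (x0 i) (d0 i) (h i) (x i) ^ 2 + 4 * delta0 h0 x0 d0 h x ^ 2) * d0 i ∧
    vnormSq (dx h0 x0 d0 h x i)
      ≤ (7.5 * deltaI (h0 i) (x0 i) (d0 i) (h i) (x i) ^ 2 + 4 * delta0 h0 x0 d0 h x ^ 2) * d0 i ∧
    vnormSq (dh h0 x0 d0 h x i) * vnormSq (dx h0 x0 d0 h x i)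
      ≤ (deltaI (h0 i) (x0 i) (d0 i) (h i) (x i) ^ 2 + delta0 h0 x0 d0 h x ^ 2)
        * d0 i ^ 2 / 26 := by
  have hd := hd0 i
  have hc := delta0_nonneg h0 x0 d0 h x
  have hc150 : delta0 h0 x0 d0 h x ≤ 1 / 150 := by
    have := deltaTot_le hd0 hε hNε
    rw [delta0]
    linarith
  have hh0' : vnormSq (h0 i) = d0 i := by rw [← vnorm_sq, hh0, Real.sq_sqrt hd.le]
  have hx0' : vnormSq (x0 i) = d0 i := by rw [← vnorm_sq, hx0, Real.sq_sqrt hd.le]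
  have four_mul_bound : ∀ {n : ℕ} (v : Fin n → ℂ), vnorm v ≤ 2 * Real.sqrt (d0 i) →
      vnormSq v ≤ 4 * d0 i := fun v hv => by
    have := pow_le_pow_left₀ (Real.sqrt_nonneg (vnormSq v)) hv 2
    rw [mul_pow, Real.sq_sqrt hd.le] at this
    rw [← vnorm_sq]
    refine this.trans_eq (by ring)
  have hD := deltaI_nonneg (h0 i) (x0 i) hd (h i) (x i)
  have hD15 := (hNε i).trans hε15
  have hfrob := frobSq_eq_deltaI (h0 i) (x0 i) hd (h i) (x i)
  by_cases hcase : vnorm (x i) ≤ vnorm (h i)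
  · have hα : alphaC h0 x0 d0 h x i
        = ((1 - delta0 h0 x0 d0 h x : ℝ) : ℂ) * (vinner (h0 i) (h i) / ((d0 i : ℝ) : ℂ)) :=
      if_pos hcase
    have hvu : vnormSq (x i) ≤ vnormSq (h i) := by
      rw [← vnorm_sq, ← vnorm_sq]
      exact pow_le_pow_left₀ (Real.sqrt_nonneg _) hcase 2
    obtain ⟨⟨-, h4⟩, hb⟩ := block_bounds hd hh0' hx0' (four_mul_bound _ (hNd i).1) hvu hD hD15
      hc hc150 hfrob hα rfl
    refine ⟨?_, hb⟩
    have h2 : ‖vinner (h0 i) (h i) / ((d0 i : ℝ) : ℂ)‖ ≤ 2 :=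
      le_of_sq_le_sq (by linarith) (by norm_num)
    rw [hα, norm_mul, Complex.norm_real, Real.norm_eq_abs, abs_of_nonneg (by linarith)]
    nlinarith [norm_nonneg (vinner (h0 i) (h i) / ((d0 i : ℝ) : ℂ))]
  · have hα : alphaC h0 x0 d0 h x i = (conj (((1 - delta0 h0 x0 d0 h x : ℝ) : ℂ)
        * (vinner (x0 i) (x i) / ((d0 i : ℝ) : ℂ))))⁻¹ := by
      rw [alphaC, if_neg hcase, map_mul, Complex.conj_ofReal, one_div, alpha2]
    have hα' : (conj (alphaC h0 x0 d0 h x i))⁻¹ = ((1 - delta0 h0 x0 d0 h x : ℝ) : ℂ)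
        * (vinner (x0 i) (x i) / ((d0 i : ℝ) : ℂ)) := by
      rw [hα, map_inv₀, inv_inv, Complex.conj_conj]
    have hvu : vnormSq (h i) ≤ vnormSq (x i) := by
      rw [← vnorm_sq, ← vnorm_sq]
      exact pow_le_pow_left₀ (Real.sqrt_nonneg _) (not_le.mp hcase).le 2
    rw [← frobSq_rankOne_sub_comm] at hfrob
    obtain ⟨⟨h13, -⟩, hx1, hh1, hprod⟩ := block_bounds hd hx0' hh0'
      (four_mul_bound _ (hNd i).2) hvu hD hD15 hc hc150 hfrob hα'
      (r := alphaC h0 x0 d0 h x i) (by rw [map_inv₀, inv_inv, Complex.conj_conj])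
    refine ⟨?_, hh1, hx1, (mul_comm _ _).trans_le hprod⟩
    have h9 : 9 / 10 ≤ ‖vinner (x0 i) (x i) / ((d0 i : ℝ) : ℂ)‖ :=
      le_of_sq_le_sq (by linarith) (norm_nonneg _)
    rw [hα, norm_inv, RCLike.norm_conj, norm_mul, Complex.norm_real, Real.norm_eq_abs,
      abs_of_nonneg (by linarith)]
    exact inv_le_of_inv_le₀ (by norm_num) (by nlinarith)

theorem vinner_sub_smul {n : ℕ} (b u u0 : Fin n → ℂ) (t : ℂ) :
    vinner b (fun k => u k - t * u0 k) = vinner b u - t * vinner b u0 := by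
  simp only [vinner, Finset.mul_sum, ← Finset.sum_sub_distrib]
  exact Finset.sum_congr rfl fun _ _ => by ring

/-- bounds on `Δhᵢ` and `Δxᵢ`. -/
theorem statement11
    {K N L s : ℕ} (hK : 0 < K) (hN : 0 < N) (hL : 0 < L) (hs : 0 < s)
    (b : Fin L → Fin K → ℂ)
    (h0 : Fin s → Fin K → ℂ) (x0 : Fin s → Fin N → ℂ)
    (d0 : Fin s → ℝ) (hd0 : ∀ i, 0 < d0 i)
    (hh0 : ∀ i, vnorm (h0 i) = Real.sqrt (d0 i))
    (hx0 : ∀ i, vnorm (x0 i) = Real.sqrt (d0 i))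
    (μ ε : ℝ) (hμ : 0 < μ) (hε : 0 < ε) (hε15 : ε ≤ 1 / 15)
    (h : Fin s → Fin K → ℂ) (x : Fin s → Fin N → ℂ)
    (hNd : inNd d0 h x) (hNε : inNeps h0 x0 d0 ε h x) :
    (∀ i,
      max (vnormSq (dh h0 x0 d0 h x i)) (vnormSq (dx h0 x0 d0 h x i))
          ≤ (7.5 * deltaI (h0 i) (x0 i) (d0 i) (h i) (x i) ^ 2
              + 4 * delta0 h0 x0 d0 h x ^ 2) * d0 i
      ∧ vnormSq (dh h0 x0 d0 h x i) * vnormSq (dx h0 x0 d0 h x i)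
          ≤ (deltaI (h0 i) (x0 i) (d0 i) (h i) (x i) ^ 2
              + delta0 h0 x0 d0 h x ^ 2) * d0 i ^ 2 / 26)
    ∧ (inNmu b d0 μ h → muhLe b h0 μ →
        ∀ i l, Real.sqrt L * ‖vinner (b l) (dh h0 x0 d0 h x i)‖
          ≤ 6 * μ * Real.sqrt (d0 i)) := by
  have hbounds := dh_dx_bounds hd0 hh0 hx0 hε.le hε15 hNd hNε
  refine ⟨fun i => ?_, fun hNμ hμh i l => ?_⟩
  · obtain ⟨-, hh, hx, hprod⟩ := hbounds i
    exact ⟨max_le hh hx, hprod⟩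
  · obtain ⟨hα, -⟩ := hbounds i
    have h1 := hNμ i l
    have h2 := hμh i l
    rw [hh0] at h2
    calc Real.sqrt L * ‖vinner (b l) (dh h0 x0 d0 h x i)‖
        ≤ Real.sqrt L * (‖vinner (b l) (h i)‖ + 2 * ‖vinner (b l) (h0 i)‖) := by
          unfold dh
          rw [vinner_sub_smul]
          gcongr
          refine (norm_sub_le _ _).trans ?_
          rw [norm_mul]
          gcongr
      _ ≤ 6 * μ * Real.sqrt (d0 i) := by linarith

end RGD
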